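/- Initial area decrease for the anisoperimetric ratio gradient flow started from a modified Wulff shape: let σ be a nonconstant anisotropy function which is not of the form σ(ν) = c₀ + c₁ cos ν + c₂ sin ν (so that the associated Wulff boundaries are not round circles), let a, b > 0 be constants with a/b = √π/√|W_σ|, and set σ̄ = a·σ + b. Let x : ℝ × [0,T) → ℝ² be a smooth family of closed curves evolving by the anisoperimetric ratio gradient flow ∂_t x = (k_σ − L_σ(t)/(2A(t)))·N whose initial curve x(·,0) parameterizes the Wulff boundary ∂W_{σ̄}, i.e. the image of x(·,0) equals {−σ̄(ν)(−sin ν, cos ν) + σ̄'(ν)(cos ν, sin ν) : ν ∈ ℝ}. Then (d/dt) A(t)|_{t=0} = √(π·|W_σ|) − (1/2)·L(∂W_σ) < 0. -/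

import Mathlib

open Real

/-- The Wulff area `|W_σ| = (1/2)∫₀^{2π} σ(ν)(σ(ν)+σ''(ν)) dν`. -/
noncomputable def wulffArea (σ : ℝ → ℝ) : ℝ :=
  (1 / 2) * ∫ ν in (0:ℝ)..(2 * π), σ ν * (σ ν + deriv (deriv σ) ν)

/-- The standard parameterization of the Wulff boundary `∂W_σ`:
`w(ν) = −σ(ν)(−sin ν, cos ν) + σ'(ν)(cos ν, sin ν)`. -/
noncomputable def wulffPoint (σ : ℝ → ℝ) (t : ℝ) : ℝ × ℝ :=
  (-σ t) • ((-Real.sin t, Real.cos t) : ℝ × ℝ) +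
    (deriv σ t) • ((Real.cos t, Real.sin t) : ℝ × ℝ)

/-- The modified anisotropy `σ̄ = a·σ + b`. -/
noncomputable def modAniso (σ : ℝ → ℝ) (a b : ℝ) : ℝ → ℝ :=
  fun s => a * σ s + b

/-- Anisotropic length `L_σ(t) = ∫₀¹ σ(ν(u,t))|∂_u x(u,t)| du`. -/
noncomputable def aLenF (σ : ℝ → ℝ) (g νf : ℝ → ℝ → ℝ) (t : ℝ) : ℝ :=
  ∫ u in (0:ℝ)..1, σ (νf u t) * g u t

/-- Enclosed area `A(t) = (1/2)∫₀¹ det(x(u,t), ∂_u x(u,t)) du`. -/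
noncomputable def areaF (x : ℝ → ℝ → ℝ × ℝ) (g νf : ℝ → ℝ → ℝ) (t : ℝ) : ℝ :=
  (1 / 2) * ∫ u in (0:ℝ)..1,
    ((x u t).1 * (g u t * Real.sin (νf u t)) - (x u t).2 * (g u t * Real.cos (νf u t)))


/-!
The first variation of the area enclosed by a closed curve moving with normal velocity `V` is
`-∫ V ds`. For a support function `S` with `S + S'' > 0`, the linear functional `det(·, τ(θ))` is
maximal on the Wulff boundary `∂W_S` exactly at the point with tangent angle `θ`. Hence a curve
tracing `∂W_S` has at each of its points the tangent angle of `∂W_S` up to a multiple of `π`, and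
positivity of the enclosed area excludes the odd multiples. All integrals over the initial curve
thereby become integrals over the tangent angle, with `ds = (σ̄ + σ̄'') dθ`. The prescribed ratio
`a / b` gives `|W_σ̄| = b L(∂W_σ̄)` and `L_σ(0) = b (2 √(π |W_σ|) + L(∂W_σ))`, so the initial area
derivative is `√(π |W_σ|) - L(∂W_σ) / 2`. It is negative by Hurwitz's Fourier-series proof of the
isoperimetric inequality `4 π |W_σ| < L(∂W_σ)²`, strict because `σ` has a nonzero Fourier
coefficient of order at least two.
-/

theorem continuous_of_hasDerivAt {E : Type*} [NormedAddCommGroup E] [NormedSpace ℝ E]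
    {f f' : ℝ → E} (hf : ∀ x, HasDerivAt f (f' x) x) : Continuous f :=
  continuous_iff_continuousAt.2 fun x => (hf x).continuousAt

theorem periodic_deriv {f : ℝ → ℝ} {c : ℝ} (hf : Function.Periodic f c) :
    Function.Periodic (deriv f) c := fun x => by
  rw [← deriv_comp_add_const, funext hf]

theorem continuous_add_deriv_deriv {f : ℝ → ℝ} (hf : ContDiff ℝ 2 f) :
    Continuous fun x => f x + deriv (deriv f) x :=
  hf.continuous.add ((hf.deriv' (n := 1)).continuous_deriv le_rfl)

theorem periodic_add_deriv_deriv {f : ℝ → ℝ} {c : ℝ} (hf : Function.Periodic f c) :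
    Function.Periodic (fun x => f x + deriv (deriv f) x) c :=
  fun x => congrArg₂ (· + ·) (hf x) (periodic_deriv (periodic_deriv hf) x)

theorem integral_add_deriv_deriv {f : ℝ → ℝ} {c : ℝ} (hf : ContDiff ℝ 2 f)
    (hper : Function.Periodic f c) :
    ∫ x in (0 : ℝ)..c, (f x + deriv (deriv f) x) = ∫ x in (0 : ℝ)..c, f x := by
  have hf' : ContDiff ℝ 1 (deriv f) := hf.deriv'
  have hint := (hf'.continuous_deriv le_rfl).intervalIntegrable (μ := MeasureTheory.volume) 0 c
  rw [intervalIntegral.integral_add (hf.continuous.intervalIntegrable _ _) hint,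
    intervalIntegral.integral_eq_sub_of_hasDerivAt
      (fun x _ => (hf'.differentiable one_ne_zero x).hasDerivAt) hint,
    (periodic_deriv hper).eq, sub_self, add_zero]

theorem integral_comp_mul_deriv_of_periodic {h n n' : ℝ → ℝ} {α β T : ℝ} (hh : Continuous h)
    (hper : Function.Periodic h T) (hn : ∀ u, HasDerivAt n (n' u) u) (hn' : Continuous n')
    (hadd : n β = n α + T) : ∫ u in α..β, h (n u) * n' u = ∫ θ in (0 : ℝ)..T, h θ := by
  rw [← zero_add T, ← hper.intervalIntegral_add_eq (n α) 0, ← hadd]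
  exact intervalIntegral.integral_comp_mul_deriv (fun u _ => hn u) hn'.continuousOn hh

/-! ### Hurwitz's inequality -/

section Hurwitz

theorem hasSum_sq_fourierCoeffOn_of_continuousOn {a b : ℝ} (hab : a < b) {f : ℝ → ℂ}
    (hf : ContinuousOn f (Set.uIcc a b)) :
    HasSum (fun n => ‖fourierCoeffOn hab f n‖ ^ 2) ((b - a)⁻¹ • ∫ x in a..b, ‖f x‖ ^ 2) := by
  rw [Set.uIcc_of_le hab.le] at hf
  refine hasSum_sq_fourierCoeffOn hab ((MeasureTheory.memLp_two_iff_integrable_sq_norm ?_).2 ?_)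
  · exact (hf.mono Set.Ioc_subset_Icc_self).aestronglyMeasurable measurableSet_Ioc
  · exact (hf.norm.pow 2).integrableOn_Icc.mono_set Set.Ioc_subset_Icc_self

theorem fourierCoeffOn_deriv_of_eq {a b : ℝ} (hab : a < b) {f f' : ℝ → ℂ}
    (hf : ∀ x ∈ Set.uIcc a b, HasDerivAt f (f' x) x)
    (hf' : IntervalIntegrable f' MeasureTheory.volume a b) (hper : f b = f a) (n : ℤ) :
    fourierCoeffOn hab f' n = 2 * π * Complex.I * n / (b - a) * fourierCoeffOn hab f n := by
  rcases eq_or_ne n 0 with rfl | hn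
  · simp [fourierCoeffOn_eq_integral, intervalIntegral.integral_eq_sub_of_hasDerivAt hf hf', hper]
  · have hba : (b - a : ℂ) ≠ 0 := by exact_mod_cast (sub_pos.2 hab).ne'
    rw [fourierCoeffOn_of_hasDerivAt hab hn hf hf', hper]
    field

theorem eq_sum_fourierCoeffOn_of_periodic {T : ℝ} (hT : 0 < T) {f : ℝ → ℂ}
    (hf : Continuous f) (hper : Function.Periodic f T) {s : Finset ℤ}
    (hs : ∀ n ∉ s, fourierCoeffOn hT f n = 0) (x : ℝ) :
    f x = ∑ n ∈ s, fourierCoeffOn hT f n * fourier n (x : AddCircle T) := by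
  have : Fact (0 < T) := ⟨hT⟩
  let F : C(AddCircle T, ℂ) := ⟨hper.lift, continuous_quot_lift _ hf⟩
  have hF : ∀ y : ℝ, F (y : AddCircle T) = f y := hper.lift_coe
  have hcoeff : ∀ n, fourierCoeff F n = fourierCoeffOn hT f n := fun n => by
    rw [fourierCoeff_eq_intervalIntegral _ _ 0, fourierCoeffOn_eq_integral]
    simp only [hF, zero_add, sub_zero, fourier_coe_apply]
  have hsum := has_pointwise_sum_fourier_series_of_summable (f := F)
    (summable_of_ne_finset_zero (s := s) fun n hn => (hcoeff n).trans (hs n hn)) x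
  simp only [hcoeff, smul_eq_mul] at hsum
  exact hsum.unique (hasSum_sum_of_ne_finset_zero fun n hn => by rw [hs n hn, zero_mul])

theorem exists_eq_add_cos_add_sin_of_fourierCoeffOn_eq_zero {f : ℝ → ℝ} (hf : Continuous f)
    (hper : Function.Periodic f (2 * π))
    (hcoeff : ∀ n : ℤ, 1 < |n| → fourierCoeffOn two_pi_pos (fun x => (f x : ℂ)) n = 0) :
    ∃ c₀ c₁ c₂ : ℝ, ∀ x, f x = c₀ + c₁ * cos x + c₂ * sin x := by
  set c := fourierCoeffOn two_pi_pos fun x => (f x : ℂ)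
  refine ⟨(c 0).re, (c 1).re + (c (-1)).re, (c (-1)).im - (c 1).im, fun x => ?_⟩
  have hsum := eq_sum_fourierCoeffOn_of_periodic two_pi_pos (f := fun x => (f x : ℂ))
    (by fun_prop) (fun x => by simp [hper x]) (s := {-1, 0, 1})
    (fun n hn => hcoeff n (by simp only [Finset.mem_insert, Finset.mem_singleton] at hn; grind)) x
  have hfourier : ∀ n : ℤ, fourier n (x : AddCircle (2 * π)) =
      (cos (n * x) : ℂ) + (sin (n * x) : ℂ) * Complex.I := fun n => by
    rw [fourier_coe_apply, Complex.ofReal_cos, Complex.ofReal_sin, ← Complex.exp_mul_I]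
    push_cast
    congr 1
    field
  have hre : f x = (c (-1)).re * cos x + (c (-1)).im * sin x +
      ((c 0).re + ((c 1).re * cos x - (c 1).im * sin x)) := by
    simpa [hfourier, -Complex.ofReal_cos, -Complex.ofReal_sin] using congrArg Complex.re hsum
  linear_combination hre

theorem hasSum_sq_sub_one_mul_sq_fourierCoeffOn {f f' : ℝ → ℝ} (hf : ∀ x, HasDerivAt f (f' x) x)
    (hf' : Continuous f') (hper : Function.Periodic f (2 * π)) :
    HasSum (fun n : ℤ => ((n : ℝ) ^ 2 - 1) *
        ‖fourierCoeffOn two_pi_pos (fun x => (f x : ℂ)) n‖ ^ 2)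
      ((2 * π)⁻¹ * ∫ x in (0 : ℝ)..(2 * π), (f' x ^ 2 - f x ^ 2)) := by
  have hfc := continuous_of_hasDerivAt hf
  have hderiv := fourierCoeffOn_deriv_of_eq two_pi_pos (f := fun x => (f x : ℂ))
    (fun x _ => (hf x).ofReal_comp) (Continuous.intervalIntegrable (by fun_prop) _ _)
    (by simpa using hper 0)
  have hcoeff : ∀ n : ℤ, ‖fourierCoeffOn two_pi_pos (fun x => (f' x : ℂ)) n‖ ^ 2 =
      (n : ℝ) ^ 2 * ‖fourierCoeffOn two_pi_pos (fun x => (f x : ℂ)) n‖ ^ 2 := fun n => by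
    have : (2 * π * Complex.I * n / ((2 * π : ℝ) - (0 : ℝ)) : ℂ) = Complex.I * n := by
      push_cast
      field
    rw [hderiv, this]
    simp [mul_pow]
  have hsum := (hasSum_sq_fourierCoeffOn_of_continuousOn two_pi_pos (f := fun x => (f' x : ℂ))
    (by fun_prop)).sub (hasSum_sq_fourierCoeffOn_of_continuousOn two_pi_pos
      (f := fun x => (f x : ℂ)) (by fun_prop))
  simp only [hcoeff, Complex.norm_real, norm_eq_abs, sq_abs, sub_zero, smul_eq_mul,
    ← mul_sub] at hsum
  rw [intervalIntegral.integral_sub (Continuous.intervalIntegrable (by fun_prop) _ _)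
    (Continuous.intervalIntegrable (by fun_prop) _ _)]
  simpa only [sub_mul, one_mul] using hsum

theorem neg_sq_norm_zero_lt_of_hasSum_sq_sub_one_mul {c : ℤ → ℂ} {J : ℝ} {m : ℤ}
    (hsum : HasSum (fun n : ℤ => ((n : ℝ) ^ 2 - 1) * ‖c n‖ ^ 2) J) (hm : 1 < |m|)
    (hcm : c m ≠ 0) : -‖c 0‖ ^ 2 < J := by
  have hnonneg : ∀ n : ℤ, n ≠ 0 → 0 ≤ ((n : ℝ) ^ 2 - 1) * ‖c n‖ ^ 2 := fun n hn => by
    have : (1 : ℝ) ≤ (n : ℝ) ^ 2 := by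
      exact_mod_cast (one_le_sq_iff_one_le_abs n).2 (Int.one_le_abs hn)
    exact mul_nonneg (sub_nonneg.2 this) (sq_nonneg _)
  have hpos : 0 < ((m : ℝ) ^ 2 - 1) * ‖c m‖ ^ 2 := by
    have : (1 : ℝ) < (m : ℝ) ^ 2 := by exact_mod_cast (one_lt_sq_iff_one_lt_abs m).2 hm
    exact mul_pos (sub_pos.2 this) (pow_pos (norm_pos_iff.2 hcm) 2)
  have hm0 : 0 ≠ m := by rintro rfl; simp at hm
  have hle := sum_le_hasSum {0, m} (fun n hn => hnonneg n (by grind)) hsum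
  rw [Finset.sum_pair hm0] at hle
  push_cast at hle
  linarith

/-- Hurwitz's isoperimetric inequality for a domain with support function `f`. -/
theorem two_pi_mul_integral_sq_sub_deriv_sq_lt {f f' : ℝ → ℝ}
    (hf : ∀ x, HasDerivAt f (f' x) x) (hf' : Continuous f') (hper : Function.Periodic f (2 * π))
    (hne : ¬∃ c₀ c₁ c₂ : ℝ, ∀ x, f x = c₀ + c₁ * cos x + c₂ * sin x) :
    2 * π * ∫ x in (0 : ℝ)..(2 * π), (f x ^ 2 - f' x ^ 2) <
      (∫ x in (0 : ℝ)..(2 * π), f x) ^ 2 := by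
  set c := fourierCoeffOn two_pi_pos fun x => (f x : ℂ) with hc
  obtain ⟨m, hm, hcm⟩ : ∃ m : ℤ, 1 < |m| ∧ c m ≠ 0 := by
    contrapose! hne
    exact exists_eq_add_cos_add_sin_of_fourierCoeffOn_eq_zero (continuous_of_hasDerivAt hf) hper hne
  have hmean : ‖c 0‖ ^ 2 = (2 * π)⁻¹ ^ 2 * (∫ x in (0 : ℝ)..(2 * π), f x) ^ 2 := by
    rw [hc, fourierCoeffOn_eq_integral]
    simp [intervalIntegral.integral_ofReal, mul_pow]
  have hlt := neg_sq_norm_zero_lt_of_hasSum_sq_sub_one_mul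
    (hasSum_sq_sub_one_mul_sq_fourierCoeffOn hf hf' hper) hm hcm
  rw [hmean] at hlt
  calc 2 * π * ∫ x in (0 : ℝ)..(2 * π), (f x ^ 2 - f' x ^ 2)
      = (2 * π) ^ 2 * -((2 * π)⁻¹ * ∫ x in (0 : ℝ)..(2 * π), (f' x ^ 2 - f x ^ 2)) := by
        rw [← mul_neg, ← intervalIntegral.integral_neg]
        simp only [neg_sub]
        field
    _ < (2 * π) ^ 2 * ((2 * π)⁻¹ ^ 2 * (∫ x in (0 : ℝ)..(2 * π), f x) ^ 2) := by
        gcongr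
        exact neg_lt.1 hlt
    _ = (∫ x in (0 : ℝ)..(2 * π), f x) ^ 2 := by field

end Hurwitz

/-! ### First variation of enclosed area -/

section Variation

open Filter MeasureTheory Set Topology

variable {E : Type*} [NormedAddCommGroup E] [NormedSpace ℝ E] {s : Set ℝ}

theorem continuousOn_partialDeriv {x xu : ℝ → ℝ → E} (hs : UniqueDiffOn ℝ s)
    (hx : ContDiffOn ℝ 1 (fun p : ℝ × ℝ => x p.1 p.2) (univ ×ˢ s))
    (hxu : ∀ u, ∀ t ∈ s, HasDerivAt (fun v => x v t) (xu u t) u) :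
    ContinuousOn (fun p : ℝ × ℝ => xu p.1 p.2) (univ ×ˢ s) := by
  have hD := hx.continuousOn_fderivWithin (uniqueDiffOn_univ.prod hs) le_rfl
  refine (hD.clm_apply (continuousOn_const (c := ((1 : ℝ), (0 : ℝ))))).congr fun p hp => ?_
  have hline : HasDerivWithinAt (fun v : ℝ => (v, p.2)) ((1 : ℝ), (0 : ℝ)) univ p.1 :=
    ((hasDerivAt_id p.1).prodMk (hasDerivAt_const p.1 p.2)).hasDerivWithinAt
  have hcomp := (hx.differentiableOn one_ne_zero p hp).hasFDerivWithinAt.comp_hasDerivWithinAt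
    (f := fun v : ℝ => (v, p.2)) p.1 hline fun v _ => ⟨trivial, hp.2⟩
  exact (hxu p.1 p.2 hp.2).unique (hcomp.hasDerivAt univ_mem)

theorem continuous_partialDeriv {x xu : ℝ → ℝ → E} (hs : UniqueDiffOn ℝ s)
    (hx : ContDiffOn ℝ 1 (fun p : ℝ × ℝ => x p.1 p.2) (univ ×ˢ s))
    (hxu : ∀ u, ∀ t ∈ s, HasDerivAt (fun v => x v t) (xu u t) u) {t : ℝ} (ht : t ∈ s) :
    Continuous fun u => xu u t :=
  (continuousOn_partialDeriv hs hx hxu).comp_continuous (f := fun u => (u, t)) (by fun_prop)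
    fun _ => ⟨trivial, ht⟩

variable {ω : E →L[ℝ] E →L[ℝ] ℝ} {α β : ℝ}

theorem integral_alternating_deriv_comm (hω : ∀ v, ω v v = 0) {p q p' q' : ℝ → E}
    (hp : ∀ u ∈ uIcc α β, HasDerivAt p (p' u) u)
    (hq : ∀ u ∈ uIcc α β, HasDerivAt q (q' u) u)
    (hp' : ContinuousOn p' (uIcc α β)) (hq' : ContinuousOn q' (uIcc α β))
    (hpc : p β = p α) (hqc : q β = q α) :
    ∫ u in α..β, ω (p u) (q' u) = ∫ u in α..β, ω (q u) (p' u) := by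
  have hpcont := HasDerivAt.continuousOn hp
  have hqcont := HasDerivAt.continuousOn hq
  have hanti : ∀ v w, ω v w = -ω w v := fun v w => by
    have := hω (v + w)
    simp only [map_add, add_apply, hω] at this
    linarith
  have h₁ : IntervalIntegrable (fun u => ω (p u) (q' u)) volume α β :=
    ContinuousOn.intervalIntegrable (by fun_prop)
  have h₂ : IntervalIntegrable (fun u => ω (q u) (p' u)) volume α β :=
    ContinuousOn.intervalIntegrable (by fun_prop)
  have hFTC := intervalIntegral.integral_eq_sub_of_hasDerivAt
    (fun u hu => (ω.hasDerivAt_of_bilinear (fun _ => hp u hu) (fun _ => hq u hu)).congr_deriv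
      (by rw [hanti (p' u), ← sub_eq_add_neg])) (h₁.sub h₂)
  rw [intervalIntegral.integral_sub h₁ h₂, hpc, hqc, sub_self] at hFTC
  exact sub_eq_zero.1 hFTC

theorem integral_alternating_deriv_sub (hω : ∀ v, ω v v = 0) {p q p' q' : ℝ → E}
    (hp : ∀ u ∈ uIcc α β, HasDerivAt p (p' u) u)
    (hq : ∀ u ∈ uIcc α β, HasDerivAt q (q' u) u)
    (hp' : ContinuousOn p' (uIcc α β)) (hq' : ContinuousOn q' (uIcc α β))
    (hpc : p β = p α) (hqc : q β = q α) :
    (∫ u in α..β, ω (p u) (p' u)) - ∫ u in α..β, ω (q u) (q' u) =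
      ∫ u in α..β, ω (p u - q u) (p' u + q' u) := by
  have hpcont := HasDerivAt.continuousOn hp
  have hqcont := HasDerivAt.continuousOn hq
  simp only [map_sub, map_add, sub_apply]
  have hcomm := integral_alternating_deriv_comm hω hp hq hp' hq' hpc hqc
  rw [intervalIntegral.integral_add, intervalIntegral.integral_sub,
    intervalIntegral.integral_sub, hcomm]
  · ring
  all_goals exact ContinuousOn.intervalIntegrable (by fun_prop)

/-- The polarized form of the difference quotient contains no time derivative of `xu`, so no mixed
second derivatives of `x` are needed in the limit. -/
theorem slope_half_integral_alternating (hω : ∀ v, ω v v = 0) {x xu : ℝ → ℝ → E} {t₀ t : ℝ}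
    (hx₀ : ∀ u ∈ uIcc α β, HasDerivAt (fun v => x v t₀) (xu u t₀) u)
    (hx : ∀ u ∈ uIcc α β, HasDerivAt (fun v => x v t) (xu u t) u)
    (hxu₀ : ContinuousOn (fun u => xu u t₀) (uIcc α β))
    (hxu : ContinuousOn (fun u => xu u t) (uIcc α β))
    (hclosed₀ : x β t₀ = x α t₀) (hclosed : x β t = x α t) :
    slope (fun t => (1 / 2) * ∫ u in α..β, ω (x u t) (xu u t)) t₀ t =
      ∫ u in α..β, ω (slope (x u) t₀ t) (midpoint ℝ (xu u t) (xu u t₀)) := by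
  have hsub := integral_alternating_deriv_sub hω hx hx₀ hxu hxu₀ hclosed hclosed₀
  simp only [slope_def_module, midpoint_eq_smul_add, map_smul, smul_apply, smul_eq_mul,
    intervalIntegral.integral_const_mul, ← mul_sub, hsub, invOf_eq_inv]
  ring

theorem norm_slope_le_of_lipschitzOnWith {f : ℝ → E} {K : NNReal} (hf : LipschitzOnWith K f s)
    {a b : ℝ} (ha : a ∈ s) (hb : b ∈ s) : ‖slope f a b‖ ≤ K := by
  rcases eq_or_ne a b with rfl | hab
  · simp
  · rw [slope_def_module, norm_smul, norm_inv,
      inv_mul_le_iff₀ (norm_pos_iff.2 (sub_ne_zero.2 hab.symm)), mul_comm]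
    exact hf.norm_sub_le hb ha

theorem exists_norm_slope_le_of_contDiffOn {x : ℝ → ℝ → E} {R : Set ℝ} (hR : IsCompact R)
    (hRconv : Convex ℝ R) (hs : IsCompact s) (hconv : Convex ℝ s)
    (hx : ContDiffOn ℝ 1 (fun p : ℝ × ℝ => x p.1 p.2) (R ×ˢ s)) :
    ∃ K, ∀ u ∈ R, ∀ t₀ ∈ s, ∀ t ∈ s, ‖slope (x u) t₀ t‖ ≤ K := by
  obtain ⟨K, hK⟩ := hx.exists_lipschitzOnWith one_ne_zero (hRconv.prod hconv) (hR.prod hs)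
  have hLip : ∀ u ∈ R, LipschitzOnWith K (x u) s := fun u hu =>
    LipschitzOnWith.of_dist_le_mul fun t ht t' ht' => by
      simpa [Prod.dist_eq] using hK.dist_le_mul (u, t) ⟨hu, ht⟩ (u, t') ⟨hu, ht'⟩
  exact ⟨K, fun u hu t₀ ht₀ t ht => norm_slope_le_of_lipschitzOnWith (hLip u hu) ht₀ ht⟩

theorem tendsto_integral_bilinear {ι : Type*} {l : Filter ι} [l.IsCountablyGenerated]
    {p q : ι → ℝ → E} {p₀ q₀ : ℝ → E} {K M : ℝ}
    (hpc : ∀ᶠ t in l, ContinuousOn (p t) (uIcc α β))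
    (hqc : ∀ᶠ t in l, ContinuousOn (q t) (uIcc α β))
    (hpK : ∀ᶠ t in l, ∀ u ∈ uIcc α β, ‖p t u‖ ≤ K)
    (hqM : ∀ᶠ t in l, ∀ u ∈ uIcc α β, ‖q t u‖ ≤ M)
    (hp : ∀ u ∈ uIcc α β, Tendsto (p · u) l (𝓝 (p₀ u)))
    (hq : ∀ u ∈ uIcc α β, Tendsto (q · u) l (𝓝 (q₀ u))) :
    Tendsto (fun t => ∫ u in α..β, ω (p t u) (q t u)) l
      (𝓝 (∫ u in α..β, ω (p₀ u) (q₀ u))) := by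
  refine intervalIntegral.tendsto_integral_filter_of_dominated_convergence
    (fun _ => ‖ω‖ * K * M) ?_ ?_ intervalIntegrable_const (.of_forall fun u hu => ?_)
  · filter_upwards [hpc, hqc] with t hpt hqt
    have : ContinuousOn (fun u => ω (p t u) (q t u)) (uIcc α β) := by fun_prop
    exact (this.mono uIoc_subset_uIcc).aestronglyMeasurable measurableSet_uIoc
  · filter_upwards [hpK, hqM] with t hpt hqt
    refine .of_forall fun u hu => ?_
    have hu' := uIoc_subset_uIcc hu
    exact ω.le_of_opNorm₂_le_of_le le_rfl (hpt u hu') (hqt u hu')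
  · have hu' := uIoc_subset_uIcc hu
    exact (ω.continuous₂.tendsto (p₀ u, q₀ u)).comp ((hp u hu').prodMk_nhds (hq u hu'))

theorem hasDerivWithinAt_half_integral_alternating (hω : ∀ v, ω v v = 0) {c d : ℝ}
    {x xu : ℝ → ℝ → E} {xt : ℝ → E} {t₀ : ℝ} (ht₀ : t₀ ∈ Icc c d) (hcd : c < d)
    (hx : ContDiffOn ℝ 1 (fun p : ℝ × ℝ => x p.1 p.2) (univ ×ˢ Icc c d))
    (hclosed : ∀ t ∈ Icc c d, x β t = x α t)
    (hxu : ∀ u, ∀ t ∈ Icc c d, HasDerivAt (fun v => x v t) (xu u t) u)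
    (hxt : ∀ u, HasDerivWithinAt (x u) (xt u) (Icc c d) t₀) :
    HasDerivWithinAt (fun t => (1 / 2) * ∫ u in α..β, ω (x u t) (xu u t))
      (∫ u in α..β, ω (xt u) (xu u t₀)) (Icc c d) t₀ := by
  set J := Icc c d
  have hxu_cont := continuousOn_partialDeriv (uniqueDiffOn_Icc hcd) hx hxu
  have hcont : ∀ t ∈ J, Continuous fun u => xu u t := fun t =>
    continuous_partialDeriv (uniqueDiffOn_Icc hcd) hx hxu
  have hsub : uIcc α β ×ˢ J ⊆ univ ×ˢ J := prod_mono (subset_univ _) subset_rfl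
  obtain ⟨M, hM⟩ := (isCompact_uIcc.prod isCompact_Icc).exists_bound_of_continuousOn
    (hxu_cont.mono hsub)
  obtain ⟨K, hK⟩ := exists_norm_slope_le_of_contDiffOn isCompact_uIcc (convex_uIcc α β)
    isCompact_Icc (convex_Icc c d) (hx.mono hsub)
  have hJ : ∀ᶠ t in 𝓝[J \ {t₀}] t₀, t ∈ J := mem_of_superset self_mem_nhdsWithin sdiff_subset
  rw [hasDerivWithinAt_iff_tendsto_slope]
  refine (tendsto_integral_bilinear (K := K) (M := M)
    (hJ.mono fun t ht => ?_) (hJ.mono fun t ht => ?_) (hJ.mono fun t ht u hu => hK u hu t₀ ht₀ t ht)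
    (hJ.mono fun t ht u hu => ?_)
    (fun u _ => hasDerivWithinAt_iff_tendsto_slope.1 (hxt u)) (fun u _ => ?_)).congr'
    (hJ.mono fun t ht => (slope_half_integral_alternating hω (fun u _ => hxu u t₀ ht₀)
      (fun u _ => hxu u t ht) (hcont t₀ ht₀).continuousOn (hcont t ht).continuousOn
      (hclosed t₀ ht₀) (hclosed t ht)).symm)
  · have := continuous_of_hasDerivAt fun u => hxu u t ht
    have := continuous_of_hasDerivAt fun u => hxu u t₀ ht₀
    simp only [slope_def_module]
    fun_prop
  · have := hcont t ht
    have := hcont t₀ ht₀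
    simp only [midpoint_eq_smul_add]
    fun_prop
  · have hball : ∀ t ∈ J, xu u t ∈ Metric.closedBall 0 M := fun t ht =>
      mem_closedBall_zero_iff.2 (hM (u, t) ⟨hu, ht⟩)
    exact mem_closedBall_zero_iff.1
      ((convex_closedBall 0 M).midpoint_mem (hball t ht) (hball t₀ ht₀))
  · have htime : ContinuousOn (fun t => xu u t) J :=
      hxu_cont.comp (f := fun t => (u, t)) (by fun_prop) fun t ht => ⟨trivial, ht⟩
    have hmid := ((htime t₀ ht₀).mono (sdiff_subset (t := {t₀}))).tendsto.midpoint (R := ℝ)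
      (tendsto_const_nhds (x := xu u t₀))
    rwa [midpoint_self] at hmid

end Variation

/-! ### Wulff boundaries -/

/-- The unit vector `(cos θ, sin θ)` with tangent angle `θ`. -/
noncomputable def unitTangent (θ : ℝ) : ℝ × ℝ := (cos θ, sin θ)

/-- The unit vector `N = (-sin θ, cos θ)`, the inward normal of a positively oriented curve
with tangent angle `θ`. -/
noncomputable def unitNormal (θ : ℝ) : ℝ × ℝ := (-sin θ, cos θ)

/-- The determinant `det(v, w)` of two plane vectors, as a continuous bilinear form. -/
noncomputable def planeDet : ℝ × ℝ →L[ℝ] ℝ × ℝ →L[ℝ] ℝ :=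
  (ContinuousLinearMap.mul ℝ ℝ).bilinearComp (.fst ℝ ℝ ℝ) (.snd ℝ ℝ ℝ) -
    (ContinuousLinearMap.mul ℝ ℝ).bilinearComp (.snd ℝ ℝ ℝ) (.fst ℝ ℝ ℝ)

theorem planeDet_apply (v w : ℝ × ℝ) : planeDet v w = v.1 * w.2 - v.2 * w.1 := rfl

theorem planeDet_self (v : ℝ × ℝ) : planeDet v v = 0 := by
  rw [planeDet_apply]; ring

theorem planeDet_unitTangent_unitTangent (φ θ : ℝ) :
    planeDet (unitTangent φ) (unitTangent θ) = sin (θ - φ) := by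
  simp only [planeDet_apply, unitTangent, sin_sub]
  ring

theorem planeDet_unitNormal_unitTangent (φ θ : ℝ) :
    planeDet (unitNormal φ) (unitTangent θ) = -cos (θ - φ) := by
  simp only [planeDet_apply, unitTangent, unitNormal, cos_sub]
  ring

theorem hasDerivAt_unitTangent (θ : ℝ) : HasDerivAt unitTangent (unitNormal θ) θ :=
  (hasDerivAt_cos θ).prodMk (hasDerivAt_sin θ)

theorem hasDerivAt_unitNormal (θ : ℝ) : HasDerivAt unitNormal (-unitTangent θ) θ :=
  (hasDerivAt_sin θ).neg.prodMk (hasDerivAt_cos θ)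

theorem unitTangent_ne_zero (θ : ℝ) : unitTangent θ ≠ 0 := fun h => by
  have := planeDet_unitNormal_unitTangent θ θ
  simp [h] at this

/-- Anisotropy functions, required to be only `C²`: this suffices for the Wulff boundary to be `C¹`
with radius of curvature `S + S''`. -/
structure IsAnisotropy (S : ℝ → ℝ) : Prop where
  contDiff : ContDiff ℝ 2 S
  periodic : Function.Periodic S (2 * π)
  pos : ∀ θ, 0 < S θ
  add_deriv_deriv_pos : ∀ θ, 0 < S θ + deriv (deriv S) θ

theorem wulffPoint_eq (S : ℝ → ℝ) (θ : ℝ) :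
    wulffPoint S θ = -S θ • unitNormal θ + deriv S θ • unitTangent θ := rfl

theorem hasDerivAt_wulffPoint {S : ℝ → ℝ} (hS : ContDiff ℝ 2 S) (θ : ℝ) :
    HasDerivAt (wulffPoint S) ((S θ + deriv (deriv S) θ) • unitTangent θ) θ := by
  have h₀ := (hS.differentiable two_ne_zero θ).hasDerivAt
  have h₁ := ((hS.deriv' (n := 1)).differentiable one_ne_zero θ).hasDerivAt
  refine ((h₀.neg.smul (hasDerivAt_unitNormal θ)).add
    (h₁.smul (hasDerivAt_unitTangent θ))).congr_deriv ?_
  simp only [Pi.neg_apply]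
  module

theorem planeDet_wulffPoint_unitTangent (S : ℝ → ℝ) (φ θ : ℝ) :
    planeDet (wulffPoint S φ) (unitTangent θ) = S φ * cos (θ - φ) + deriv S φ * sin (θ - φ) := by
  simp only [wulffPoint_eq, map_add, map_smul, add_apply, smul_apply, smul_eq_mul,
    planeDet_unitNormal_unitTangent, planeDet_unitTangent_unitTangent]
  ring

theorem periodic_wulffPoint {S : ℝ → ℝ} (hS : Function.Periodic S (2 * π)) :
    Function.Periodic (wulffPoint S) (2 * π) := fun θ => by
  simp [wulffPoint, hS θ, periodic_deriv hS θ]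

namespace IsAnisotropy

variable {S : ℝ → ℝ}

theorem planeDet_wulffPoint_unitTangent_le (hS : IsAnisotropy S) (φ θ : ℝ) :
    planeDet (wulffPoint S φ) (unitTangent θ) ≤ S θ := by
  set H : ℝ → ℝ := fun φ => planeDet (wulffPoint S φ) (unitTangent θ) with hH
  have hderiv : ∀ s, HasDerivAt H ((S s + deriv (deriv S) s) * sin (θ - s)) s := fun s => by
    refine (((planeDet.flip (unitTangent θ)).hasFDerivAt.comp_hasDerivAt s
      (hasDerivAt_wulffPoint hS.contDiff s))).congr_deriv ?_
    simp [planeDet_unitTangent_unitTangent]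
  have hcont : Continuous H := continuous_of_hasDerivAt hderiv
  have hper : Function.Periodic H (2 * π) := fun s => by
    simp only [hH, periodic_wulffPoint hS.periodic s]
  obtain ⟨y, ⟨hy₁, hy₂⟩, hφy⟩ := hper.exists_mem_Ico two_pi_pos φ (θ - π)
  have hθ : H θ = S θ := by simp [hH, planeDet_wulffPoint_unitTangent]
  change H φ ≤ S θ
  rw [hφy, ← hθ]
  rcases le_total y θ with hyθ | hyθ
  · refine monotoneOn_of_hasDerivWithinAt_nonneg (convex_Icc (θ - π) θ) hcont.continuousOn
      (fun s _ => (hderiv s).hasDerivWithinAt) (fun s hs => ?_) ⟨hy₁, hyθ⟩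
      ⟨by linarith [pi_pos], le_rfl⟩ hyθ
    rw [interior_Icc] at hs
    exact mul_nonneg (hS.add_deriv_deriv_pos s).le
      (sin_nonneg_of_nonneg_of_le_pi (by linarith [hs.2]) (by linarith [hs.1]))
  · refine antitoneOn_of_hasDerivWithinAt_nonpos (convex_Icc θ (θ + π)) hcont.continuousOn
      (fun s _ => (hderiv s).hasDerivWithinAt) (fun s hs => ?_)
      ⟨le_rfl, by linarith [pi_pos]⟩ ⟨hyθ, by linarith⟩ hyθ
    rw [interior_Icc] at hs
    exact mul_nonpos_of_nonneg_of_nonpos (hS.add_deriv_deriv_pos s).le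
      (sin_nonpos_of_nonpos_of_neg_pi_le (by linarith [hs.1]) (by linarith [hs.2]))

variable {γ : ℝ → ℝ × ℝ} {g n : ℝ → ℝ}

theorem sin_sub_eq_zero_of_range_subset (hS : IsAnisotropy S)
    (hrange : Set.range γ ⊆ Set.range (wulffPoint S)) {u v φ θ : ℝ}
    (hγ : HasDerivAt γ (v • unitTangent φ) u) (hv : v ≠ 0) (hu : γ u = wulffPoint S θ) :
    sin (θ - φ) = 0 := by
  have hmax : IsLocalMax (fun w => planeDet (γ w) (unitTangent θ)) u := .of_forall fun w => by
    obtain ⟨ψ, hψ⟩ := hrange ⟨w, rfl⟩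
    simp only [← hψ, hu]
    rw [planeDet_wulffPoint_unitTangent S θ θ]
    simpa using hS.planeDet_wulffPoint_unitTangent_le ψ θ
  have hderiv := (planeDet.flip (unitTangent θ)).hasFDerivAt.comp_hasDerivAt u hγ
  have := hmax.hasDerivAt_eq_zero hderiv
  simpa [planeDet_unitTangent_unitTangent, hv] using this

theorem eq_wulffPoint_or_planeDet_neg (hS : IsAnisotropy S)
    (hrange : Set.range γ ⊆ Set.range (wulffPoint S)) {u v φ : ℝ}
    (hγ : HasDerivAt γ (v • unitTangent φ) u) (hv : v ≠ 0) :
    γ u = wulffPoint S φ ∨ planeDet (γ u) (unitTangent φ) < 0 := by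
  obtain ⟨θ, hθ⟩ := hrange ⟨u, rfl⟩
  have hsin := hS.sin_sub_eq_zero_of_range_subset hrange hγ hv hθ.symm
  have hsin' : sin (φ - θ) = 0 := by rw [← neg_sub, sin_neg, hsin, neg_zero]
  rcases sin_eq_zero_iff_cos_eq.1 hsin' with hcos | hcos
  · left
    obtain ⟨k, hk⟩ := (cos_eq_one_iff _).1 hcos
    rw [← hθ, ← (periodic_wulffPoint hS.periodic).int_mul k θ, hk, add_sub_cancel]
  · right
    rw [← hθ, planeDet_wulffPoint_unitTangent, hcos, hsin']
    linarith [hS.pos θ]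

theorem eq_wulffPoint_of_range_subset (hS : IsAnisotropy S)
    (hrange : Set.range γ ⊆ Set.range (wulffPoint S))
    (hγ : ∀ u, HasDerivAt γ (g u • unitTangent (n u)) u) (hg : ∀ u, g u ≠ 0) (hn : Continuous n)
    (hpos : ∃ u, 0 ≤ planeDet (γ u) (unitTangent (n u))) (u : ℝ) :
    γ u = wulffPoint S (n u) := by
  refine (hS.eq_wulffPoint_or_planeDet_neg hrange (hγ u) (hg u)).resolve_right fun hneg => ?_
  have hcont : Continuous fun u => planeDet (γ u) (unitTangent (n u)) := by
    have := continuous_of_hasDerivAt hγ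
    unfold unitTangent
    fun_prop
  obtain ⟨w, hw⟩ := mem_range_of_exists_le_of_exists_ge hcont ⟨u, hneg.le⟩ hpos
  rcases hS.eq_wulffPoint_or_planeDet_neg hrange (hγ w) (hg w) with h | h
  · simp only [h, planeDet_wulffPoint_unitTangent, sub_self, cos_zero, sin_zero, mul_one,
      mul_zero, add_zero] at hw
    exact (hS.pos _).ne' hw
  · exact h.ne hw

end IsAnisotropy

theorem wulffArea_eq_half_integral_sq_sub_deriv_sq {S : ℝ → ℝ} (hS : ContDiff ℝ 2 S)
    (hper : Function.Periodic S (2 * π)) :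
    wulffArea S = (1 / 2) * ∫ θ in (0 : ℝ)..(2 * π), (S θ ^ 2 - deriv S θ ^ 2) := by
  have h₁ : ContDiff ℝ 1 (deriv S) := hS.deriv'
  have hc := hS.continuous
  have hc₁ := h₁.continuous
  have hc₂ := h₁.continuous_deriv le_rfl
  have hparts := intervalIntegral.integral_mul_deriv_eq_deriv_mul (a := 0) (b := 2 * π)
    (fun θ _ => (hS.differentiable two_ne_zero θ).hasDerivAt)
    (fun θ _ => (h₁.differentiable one_ne_zero θ).hasDerivAt)
    (hc₁.intervalIntegrable _ _) (hc₂.intervalIntegrable _ _)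
  rw [hper.eq, (periodic_deriv hper).eq, sub_self, zero_sub] at hparts
  simp only [wulffArea, mul_add, sq]
  rw [intervalIntegral.integral_add (Continuous.intervalIntegrable (by fun_prop) _ _)
    (Continuous.intervalIntegrable (by fun_prop) _ _), hparts,
    intervalIntegral.integral_sub (Continuous.intervalIntegrable (by fun_prop) _ _)
    (Continuous.intervalIntegrable (by fun_prop) _ _), sub_eq_add_neg]

theorem four_pi_mul_wulffArea_lt_sq_integral {S : ℝ → ℝ} (hS : ContDiff ℝ 2 S)
    (hper : Function.Periodic S (2 * π))
    (hne : ¬∃ c₀ c₁ c₂ : ℝ, ∀ θ, S θ = c₀ + c₁ * cos θ + c₂ * sin θ) :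
    4 * π * wulffArea S < (∫ θ in (0 : ℝ)..(2 * π), S θ) ^ 2 := by
  calc 4 * π * wulffArea S
      = 2 * π * ∫ θ in (0 : ℝ)..(2 * π), (S θ ^ 2 - deriv S θ ^ 2) := by
        rw [wulffArea_eq_half_integral_sq_sub_deriv_sq hS hper]; ring
    _ < _ := two_pi_mul_integral_sq_sub_deriv_sq_lt
        (fun θ => (hS.differentiable two_ne_zero θ).hasDerivAt)
        (hS.continuous_deriv one_le_two) hper hne

/-! ### The modified anisotropy -/

theorem deriv_modAniso (σ : ℝ → ℝ) (a b : ℝ) :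
    deriv (modAniso σ a b) = fun θ => a * deriv σ θ := by
  funext θ
  unfold modAniso
  rw [deriv_add_const, deriv_const_mul_field]

theorem deriv_deriv_modAniso (σ : ℝ → ℝ) (a b : ℝ) :
    deriv (deriv (modAniso σ a b)) = fun θ => a * deriv (deriv σ) θ := by
  funext θ
  rw [deriv_modAniso, deriv_const_mul_field]

theorem modAniso_add_deriv_deriv (σ : ℝ → ℝ) (a b θ : ℝ) :
    modAniso σ a b θ + deriv (deriv (modAniso σ a b)) θ =
      a * (σ θ + deriv (deriv σ) θ) + b := by
  rw [deriv_deriv_modAniso, modAniso]; ring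

section ModAniso

variable {σ : ℝ → ℝ} {a b : ℝ}

theorem integral_modAniso (hσ : Continuous σ) : ∫ θ in (0 : ℝ)..(2 * π), modAniso σ a b θ =
    a * (∫ θ in (0 : ℝ)..(2 * π), σ θ) + 2 * π * b := by
  simp only [modAniso]
  rw [intervalIntegral.integral_add (Continuous.intervalIntegrable (by fun_prop) _ _)
    (Continuous.intervalIntegrable (by fun_prop) _ _), intervalIntegral.integral_const_mul,
    intervalIntegral.integral_const, smul_eq_mul, sub_zero]

theorem integral_mul_modAniso_add_deriv_deriv (hσ : ContDiff ℝ 2 σ) :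
    ∫ θ in (0 : ℝ)..(2 * π), σ θ * (modAniso σ a b θ + deriv (deriv (modAniso σ a b)) θ) =
      2 * a * wulffArea σ + b * ∫ θ in (0 : ℝ)..(2 * π), σ θ := by
  have := hσ.continuous
  have := continuous_add_deriv_deriv hσ
  simp only [modAniso_add_deriv_deriv, mul_add (σ _) (a * _), mul_left_comm _ a, mul_comm _ b]
  rw [intervalIntegral.integral_add (Continuous.intervalIntegrable (by fun_prop) _ _)
    (Continuous.intervalIntegrable (by fun_prop) _ _), intervalIntegral.integral_const_mul,
    intervalIntegral.integral_const_mul, wulffArea]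
  ring

theorem wulffArea_modAniso (hσ : ContDiff ℝ 2 σ) (hper : Function.Periodic σ (2 * π)) :
    wulffArea (modAniso σ a b) =
      a ^ 2 * wulffArea σ + a * b * (∫ θ in (0 : ℝ)..(2 * π), σ θ) + π * b ^ 2 := by
  have := hσ.continuous
  have := continuous_add_deriv_deriv hσ
  have hsplit : ∀ θ, modAniso σ a b θ *
      (modAniso σ a b θ + deriv (deriv (modAniso σ a b)) θ) =
      a * (σ θ * (modAniso σ a b θ + deriv (deriv (modAniso σ a b)) θ)) +
        b * (a * (σ θ + deriv (deriv σ) θ) + b) := fun θ => by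
    rw [modAniso_add_deriv_deriv, modAniso]; ring
  have hint : ∀ {f : ℝ → ℝ}, Continuous f → IntervalIntegrable f MeasureTheory.volume 0 (2 * π) :=
    fun hf => hf.intervalIntegrable _ _
  rw [wulffArea]
  simp only [hsplit]
  rw [intervalIntegral.integral_add
      (hint (by simp only [modAniso_add_deriv_deriv]; fun_prop)) (hint (by fun_prop)),
    intervalIntegral.integral_const_mul, integral_mul_modAniso_add_deriv_deriv hσ,
    intervalIntegral.integral_const_mul,
    intervalIntegral.integral_add (hint (by fun_prop)) (hint (by fun_prop)),
    intervalIntegral.integral_const_mul, integral_add_deriv_deriv hσ hper,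
    intervalIntegral.integral_const, smul_eq_mul]
  ring

end ModAniso

theorem sq_mul_eq_of_div_eq_sqrt_div_sqrt {a b p w : ℝ} (hb : b ≠ 0) (hp : 0 ≤ p) (hw : 0 < w)
    (hab : a / b = √p / √w) : a ^ 2 * w = p * b ^ 2 := by
  rw [div_eq_div_iff hb (sqrt_pos.2 hw).ne'] at hab
  calc a ^ 2 * w = (a * √w) ^ 2 := by rw [mul_pow, sq_sqrt hw.le]
    _ = p * b ^ 2 := by rw [hab, mul_pow, sq_sqrt hp]

theorem mul_eq_mul_sqrt_of_div_eq_sqrt_div_sqrt {a b p w : ℝ} (hb : b ≠ 0) (hp : 0 ≤ p)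
    (hw : 0 < w) (hab : a / b = √p / √w) : a * w = b * √(p * w) := by
  rw [div_eq_div_iff hb (sqrt_pos.2 hw).ne'] at hab
  calc a * w = a * √w * √w := by rw [mul_assoc, mul_self_sqrt hw.le]
    _ = b * √(p * w) := by rw [hab, sqrt_mul hp]; ring

namespace IsAnisotropy

variable {σ : ℝ → ℝ} (hσ : IsAnisotropy σ)
include hσ

theorem integral_pos : 0 < ∫ θ in (0 : ℝ)..(2 * π), σ θ :=
  intervalIntegral.intervalIntegral_pos_of_pos (hσ.contDiff.continuous.intervalIntegrable _ _)
    hσ.pos two_pi_pos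

theorem wulffArea_pos : 0 < wulffArea σ :=
  mul_pos one_half_pos <| intervalIntegral.intervalIntegral_pos_of_pos
    ((hσ.contDiff.continuous.mul (continuous_add_deriv_deriv hσ.contDiff)).intervalIntegrable _ _)
    (fun θ => mul_pos (hσ.pos θ) (hσ.add_deriv_deriv_pos θ)) two_pi_pos

theorem sqrt_pi_mul_wulffArea_lt
    (hne : ¬∃ c₀ c₁ c₂ : ℝ, ∀ θ, σ θ = c₀ + c₁ * cos θ + c₂ * sin θ) :
    √(π * wulffArea σ) < (1 / 2) * ∫ θ in (0 : ℝ)..(2 * π), σ θ := by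
  rw [sqrt_lt' (mul_pos one_half_pos hσ.integral_pos)]
  linarith [four_pi_mul_wulffArea_lt_sq_integral hσ.contDiff hσ.periodic hne]

variable {a b : ℝ}

theorem isAnisotropy_modAniso (ha : 0 < a) (hb : 0 < b) : IsAnisotropy (modAniso σ a b) where
  contDiff := (contDiff_const.mul hσ.contDiff).add contDiff_const
  periodic θ := by simp only [modAniso, hσ.periodic θ]
  pos θ := add_pos (mul_pos ha (hσ.pos θ)) hb
  add_deriv_deriv_pos θ := by
    rw [modAniso_add_deriv_deriv]
    exact add_pos (mul_pos ha (hσ.add_deriv_deriv_pos θ)) hb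

/-- The choice of `a / b` makes `|W_σ̄|` proportional to the perimeter of `∂W_σ̄`. -/
theorem wulffArea_modAniso_of_div_eq (hb : b ≠ 0) (hab : a / b = √π / √(wulffArea σ)) :
    wulffArea (modAniso σ a b) = b * ∫ θ in (0 : ℝ)..(2 * π), modAniso σ a b θ := by
  rw [wulffArea_modAniso hσ.contDiff hσ.periodic, integral_modAniso hσ.contDiff.continuous,
    sq_mul_eq_of_div_eq_sqrt_div_sqrt hb pi_pos.le hσ.wulffArea_pos hab]
  ring

theorem integral_mul_modAniso_add_deriv_deriv_of_div_eq (hb : b ≠ 0)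
    (hab : a / b = √π / √(wulffArea σ)) :
    ∫ θ in (0 : ℝ)..(2 * π), σ θ * (modAniso σ a b θ + deriv (deriv (modAniso σ a b)) θ) =
      b * (2 * √(π * wulffArea σ) + ∫ θ in (0 : ℝ)..(2 * π), σ θ) := by
  rw [integral_mul_modAniso_add_deriv_deriv hσ.contDiff, mul_assoc,
    mul_eq_mul_sqrt_of_div_eq_sqrt_div_sqrt hb pi_pos.le hσ.wulffArea_pos hab]
  ring

end IsAnisotropy

/-! ### The initial area derivative -/

theorem areaF_eq (x : ℝ → ℝ → ℝ × ℝ) (g νf : ℝ → ℝ → ℝ) (t : ℝ) :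
    areaF x g νf t =
      (1 / 2) * ∫ u in (0 : ℝ)..1, planeDet (x u t) (g u t • unitTangent (νf u t)) := rfl

/-- The closed curve `γ`, with speed `g` and tangent angle `n` on the parameter interval `[0, 1]`,
runs once along the Wulff boundary of `S` and passes at `u` through the point of `∂W_S` with
tangent angle `n u`. The functions `g` and `n'` record `|γ'|` and `dn/du`. -/
structure IsWulffParametrization (S : ℝ → ℝ) (γ : ℝ → ℝ × ℝ) (g n n' : ℝ → ℝ) : Prop where
  hasDerivAt_angle : ∀ u, HasDerivAt n (n' u) u
  continuous_deriv_angle : Continuous n'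
  angle_one : n 1 = n 0 + 2 * π
  eq_wulffPoint : ∀ u, γ u = wulffPoint S (n u)
  speed_eq : ∀ u, g u = (S (n u) + deriv (deriv S) (n u)) * n' u

theorem speed_eq_of_eq_wulffPoint {S : ℝ → ℝ} {γ : ℝ → ℝ × ℝ} {n : ℝ → ℝ} {u v w : ℝ}
    (hS : ContDiff ℝ 2 S) (hγ : HasDerivAt γ (v • unitTangent (n u)) u)
    (hn : HasDerivAt n w u) (heq : ∀ u, γ u = wulffPoint S (n u)) :
    v = (S (n u) + deriv (deriv S) (n u)) * w := by
  have hcomp := (hasDerivAt_wulffPoint hS (n u)).scomp u hn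
  rw [← funext (g := wulffPoint S ∘ n) heq, smul_smul, mul_comm] at hcomp
  exact smul_left_injective ℝ (unitTangent_ne_zero (n u)) (hγ.unique hcomp)

theorem continuous_of_continuous_smul_unitTangent {g n : ℝ → ℝ} (hn : Continuous n)
    (h : Continuous fun u => g u • unitTangent (n u)) : Continuous g := by
  have hg : ∀ u, planeDet (g u • unitTangent (n u)) (unitNormal (n u)) = g u := fun u => by
    simp only [planeDet_apply, unitTangent, unitNormal, Prod.smul_mk, smul_eq_mul]
    linear_combination g u * sin_sq_add_cos_sq (n u)
  rw [← funext hg]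
  unfold unitNormal
  fun_prop

theorem IsAnisotropy.isWulffParametrization {S : ℝ → ℝ} {γ : ℝ → ℝ × ℝ} {g n n' : ℝ → ℝ}
    (hS : IsAnisotropy S) (hrange : Set.range γ ⊆ Set.range (wulffPoint S))
    (hγ : ∀ u, HasDerivAt γ (g u • unitTangent (n u)) u)
    (hγ' : Continuous fun u => g u • unitTangent (n u)) (hg : ∀ u, 0 < g u)
    (hn : ∀ u, HasDerivAt n (n' u) u) (hn_one : n 1 = n 0 + 2 * π)
    (harea : 0 < ∫ u in (0 : ℝ)..1, planeDet (γ u) (g u • unitTangent (n u))) :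
    IsWulffParametrization S γ g n n' := by
  have hncont := continuous_of_hasDerivAt hn
  have hpos : ∃ u, 0 ≤ planeDet (γ u) (unitTangent (n u)) := by
    contrapose! harea
    rw [← neg_nonneg, ← intervalIntegral.integral_neg]
    refine intervalIntegral.integral_nonneg_of_forall zero_le_one fun u => ?_
    rw [map_smul, smul_eq_mul, neg_nonneg]
    exact mul_nonpos_of_nonneg_of_nonpos (hg u).le (harea u).le
  have heq := hS.eq_wulffPoint_of_range_subset hrange hγ (fun u => (hg u).ne') hncont hpos
  have hspeed : ∀ u, g u = (S (n u) + deriv (deriv S) (n u)) * n' u := fun u =>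
    speed_eq_of_eq_wulffPoint hS.contDiff (hγ u) (hn u) heq
  have hn' : ∀ u, n' u = g u / (S (n u) + deriv (deriv S) (n u)) := fun u =>
    eq_div_of_mul_eq (hS.add_deriv_deriv_pos _).ne' ((mul_comm _ _).trans (hspeed u).symm)
  refine ⟨hn, ?_, hn_one, heq, hspeed⟩
  rw [funext hn']
  exact (continuous_of_continuous_smul_unitTangent hncont hγ').div
    ((continuous_add_deriv_deriv hS.contDiff).comp hncont) fun u => (hS.add_deriv_deriv_pos _).ne'

namespace IsWulffParametrization

variable {S : ℝ → ℝ} {γ : ℝ → ℝ × ℝ} {g n n' : ℝ → ℝ}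

theorem integral_mul_speed (hγ : IsWulffParametrization S γ g n n') (hS : ContDiff ℝ 2 S)
    (hSper : Function.Periodic S (2 * π)) {h : ℝ → ℝ} (hh : Continuous h)
    (hper : Function.Periodic h (2 * π)) :
    ∫ u in (0 : ℝ)..1, h (n u) * g u =
      ∫ θ in (0 : ℝ)..(2 * π), h θ * (S θ + deriv (deriv S) θ) := by
  have hsubst := integral_comp_mul_deriv_of_periodic (hh.mul (continuous_add_deriv_deriv hS))
    (hper.mul (periodic_add_deriv_deriv hSper)) hγ.hasDerivAt_angle
    hγ.continuous_deriv_angle hγ.angle_one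
  simpa only [hγ.speed_eq, Pi.mul_apply, mul_assoc] using hsubst

theorem integral_speed (hγ : IsWulffParametrization S γ g n n') (hS : ContDiff ℝ 2 S)
    (hSper : Function.Periodic S (2 * π)) :
    ∫ u in (0 : ℝ)..1, g u = ∫ θ in (0 : ℝ)..(2 * π), S θ := by
  simpa [integral_add_deriv_deriv hS hSper] using
    hγ.integral_mul_speed hS hSper (continuous_const (y := (1 : ℝ))) fun _ => rfl

theorem integral_planeDet (hγ : IsWulffParametrization S γ g n n') (hS : ContDiff ℝ 2 S)
    (hSper : Function.Periodic S (2 * π)) :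
    (1 / 2) * ∫ u in (0 : ℝ)..1, planeDet (γ u) (g u • unitTangent (n u)) = wulffArea S := by
  have hdet : ∀ u, planeDet (γ u) (g u • unitTangent (n u)) = S (n u) * g u := fun u => by
    rw [hγ.eq_wulffPoint, map_smul, planeDet_wulffPoint_unitTangent]
    simp [mul_comm]
  simp only [hdet, hγ.integral_mul_speed hS hSper hS.continuous hSper, wulffArea]

theorem continuous_speed (hγ : IsWulffParametrization S γ g n n') (hS : ContDiff ℝ 2 S) :
    Continuous g := by
  rw [funext hγ.speed_eq]
  exact ((continuous_add_deriv_deriv hS).comp (continuous_of_hasDerivAt hγ.hasDerivAt_angle)).mul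
    hγ.continuous_deriv_angle

theorem integral_curvature_sub_const_mul_speed {k : ℝ → ℝ}
    (hγ : IsWulffParametrization S γ g n fun u => k u * g u) (hS : ContDiff ℝ 2 S)
    (hSper : Function.Periodic S (2 * π)) {h : ℝ → ℝ} (hh : Continuous h)
    (hper : Function.Periodic h (2 * π)) (c : ℝ) :
    ∫ u in (0 : ℝ)..1, (h (n u) * k u - c) * g u =
      (∫ θ in (0 : ℝ)..(2 * π), h θ) - c * ∫ θ in (0 : ℝ)..(2 * π), S θ := by
  have := continuous_of_hasDerivAt hγ.hasDerivAt_angle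
  have := hγ.continuous_deriv_angle
  have := hγ.continuous_speed hS
  simp only [sub_mul, mul_assoc]
  rw [intervalIntegral.integral_sub (Continuous.intervalIntegrable (by fun_prop) _ _)
    (Continuous.intervalIntegrable (by fun_prop) _ _), intervalIntegral.integral_const_mul,
    hγ.integral_speed hS hSper, integral_comp_mul_deriv_of_periodic hh hper hγ.hasDerivAt_angle
    hγ.continuous_deriv_angle hγ.angle_one]

end IsWulffParametrization

theorem hasDerivWithinAt_areaF {T t₀ : ℝ} (ht₀ : t₀ ∈ Set.Ico 0 T) {x : ℝ → ℝ → ℝ × ℝ}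
    {g νf : ℝ → ℝ → ℝ} {V : ℝ → ℝ}
    (hx : ContDiffOn ℝ 1 (fun p : ℝ × ℝ => x p.1 p.2) (Set.univ ×ˢ Set.Ico 0 T))
    (hclosed : ∀ t ∈ Set.Ico 0 T, x 1 t = x 0 t)
    (htang : ∀ u, ∀ t ∈ Set.Ico 0 T,
      HasDerivAt (fun v => x v t) (g u t • unitTangent (νf u t)) u)
    (hV : ∀ u, HasDerivWithinAt (x u) (V u • unitNormal (νf u t₀)) (Set.Ico 0 T) t₀) :
    HasDerivWithinAt (areaF x g νf) (-∫ u in (0 : ℝ)..1, V u * g u t₀) (Set.Ico 0 T) t₀ := by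
  obtain ⟨d, ht₀d, hdT⟩ := exists_between ht₀.2
  have hsub : Set.Icc 0 d ⊆ Set.Ico 0 T := Set.Icc_subset_Ico_right hdT
  have hvar := hasDerivWithinAt_half_integral_alternating planeDet_self (α := 0) (β := 1)
    ⟨ht₀.1, ht₀d.le⟩ (ht₀.1.trans_lt ht₀d) (hx.mono (Set.prod_mono subset_rfl hsub))
    (fun t ht => hclosed t (hsub ht)) (fun u t ht => htang u t (hsub ht))
    (fun u => (hV u).mono hsub)
  have hdet : ∀ u, planeDet (V u • unitNormal (νf u t₀)) (g u t₀ • unitTangent (νf u t₀)) =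
      -(V u * g u t₀) := fun u => by
    simp only [map_smul, smul_apply, smul_eq_mul, planeDet_unitNormal_unitTangent, sub_self,
      cos_zero]
    ring
  simp only [hdet, intervalIntegral.integral_neg] at hvar
  rw [funext (areaF_eq x g νf)]
  exact hvar.mono_of_mem_nhdsWithin (Filter.mem_of_superset
    (inter_mem_nhdsWithin _ (Iio_mem_nhds ht₀d)) fun t ht => ⟨ht.1.1, ht.2.le⟩)

theorem initial_area_decrease_anisoperimetric_flow_general {σ : ℝ → ℝ} (hσ : IsAnisotropy σ)
    (hnr : ¬∃ c₀ c₁ c₂ : ℝ, ∀ s, σ s = c₀ + c₁ * cos s + c₂ * sin s)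
    {a b : ℝ} (ha : 0 < a) (hb : 0 < b) (hab : a / b = √π / √(wulffArea σ))
    {T : ℝ} (hT : 0 < T) {x : ℝ → ℝ → ℝ × ℝ} {g νf : ℝ → ℝ → ℝ} {k : ℝ → ℝ}
    (hx : ContDiffOn ℝ 1 (fun p : ℝ × ℝ => x p.1 p.2) (Set.univ ×ˢ Set.Ico 0 T))
    (hclosed : ∀ t ∈ Set.Ico 0 T, x 1 t = x 0 t)
    (htang : ∀ u, ∀ t ∈ Set.Ico 0 T,
      HasDerivAt (fun v => x v t) (g u t • unitTangent (νf u t)) u)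
    (hg : ∀ u, 0 < g u 0) (hangle : νf 1 0 = νf 0 0 + 2 * π)
    (hk : ∀ u, HasDerivAt (fun v => νf v 0) (k u * g u 0) u)
    (hA : 0 < areaF x g νf 0)
    (hflow : ∀ u, HasDerivWithinAt (x u)
      (((σ (νf u 0) + deriv (deriv σ) (νf u 0)) * k u -
        aLenF σ g νf 0 / (2 * areaF x g νf 0)) • unitNormal (νf u 0)) (Set.Ico 0 T) 0)
    (hinit : Set.range (fun u => x u 0) ⊆ Set.range (wulffPoint (modAniso σ a b))) :
    HasDerivWithinAt (areaF x g νf)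
      (√(π * wulffArea σ) - (1 / 2) * ∫ s in (0 : ℝ)..(2 * π), σ s) (Set.Ico 0 T) 0 ∧
    √(π * wulffArea σ) - (1 / 2) * (∫ s in (0 : ℝ)..(2 * π), σ s) < 0 := by
  have hS := hσ.isAnisotropy_modAniso ha hb
  have h0 : (0 : ℝ) ∈ Set.Ico 0 T := ⟨le_rfl, hT⟩
  have hint := pos_of_mul_pos_right (areaF_eq x g νf 0 ▸ hA) one_half_pos.le
  have hγ := hS.isWulffParametrization hinit (fun u => htang u 0 h0)
    (continuous_partialDeriv (uniqueDiffOn_Ico 0 T) hx htang h0) hg hk hangle hint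
  have hlen : aLenF σ g νf 0 = _ :=
    (hγ.integral_mul_speed hS.contDiff hS.periodic hσ.contDiff.continuous hσ.periodic).trans
      (hσ.integral_mul_modAniso_add_deriv_deriv_of_div_eq hb.ne' hab)
  have harea : areaF x g νf 0 = _ :=
    (areaF_eq x g νf 0).trans <| (hγ.integral_planeDet hS.contDiff hS.periodic).trans
      (hσ.wulffArea_modAniso_of_div_eq hb.ne' hab)
  refine ⟨(hasDerivWithinAt_areaF h0 hx hclosed htang hflow).congr_deriv ?_,
    sub_neg.2 (hσ.sqrt_pi_mul_wulffArea_lt hnr)⟩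
  rw [hγ.integral_curvature_sub_const_mul_speed hS.contDiff hS.periodic
    (continuous_add_deriv_deriv hσ.contDiff) (periodic_add_deriv_deriv hσ.periodic),
    integral_add_deriv_deriv hσ.contDiff hσ.periodic, hlen, harea]
  have := hb.ne'
  have := hS.integral_pos.ne'
  field_simp
  ring

/-- Initial area decrease for the anisoperimetric ratio gradient flow started from the
modified Wulff shape `∂W_{σ̄}`, `σ̄ = a·σ + b` with `a/b = √π/√|W_σ|`:
`(d/dt) A(t)|₀ = √(π·|W_σ|) − (1/2)·L(∂W_σ) < 0`. -/
theorem initial_area_decrease_anisoperimetric_flow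
    (σ : ℝ → ℝ)
    (hσs : ContDiff ℝ (⊤ : ℕ∞) σ) (hσper : ∀ ν, σ (ν + 2 * π) = σ ν)
    (hσpos : ∀ ν, 0 < σ ν) (hσconv : ∀ ν, 0 < σ ν + deriv (deriv σ) ν)
    -- σ is nonconstant and not of the form c₀ + c₁ cos ν + c₂ sin ν
    (hnc : ¬∃ c : ℝ, ∀ s, σ s = c)
    (hnr : ¬∃ c₀ c₁ c₂ : ℝ, ∀ s, σ s = c₀ + c₁ * Real.cos s + c₂ * Real.sin s)
    (a b : ℝ) (ha : 0 < a) (hb : 0 < b)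
    (hab : a / b = Real.sqrt π / Real.sqrt (wulffArea σ))
    (T : ℝ) (hT : 0 < T) (x : ℝ → ℝ → ℝ × ℝ) (g νf νu : ℝ → ℝ → ℝ)
    (hxs : ContDiffOn ℝ (⊤ : ℕ∞) (fun p : ℝ × ℝ => x p.1 p.2)
      ((Set.univ : Set ℝ) ×ˢ Set.Ico (0:ℝ) T))
    (hνs : ContDiffOn ℝ (⊤ : ℕ∞) (fun p : ℝ × ℝ => νf p.1 p.2)
      ((Set.univ : Set ℝ) ×ˢ Set.Ico (0:ℝ) T))
    (hper : ∀ u, ∀ t ∈ Set.Ico (0:ℝ) T, x (u + 1) t = x u t)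
    (hνper : ∀ u, ∀ t ∈ Set.Ico (0:ℝ) T, νf (u + 1) t = νf u t + 2 * π)
    (hg : ∀ u, ∀ t ∈ Set.Ico (0:ℝ) T, 0 < g u t)
    (htang : ∀ u, ∀ t ∈ Set.Ico (0:ℝ) T,
      HasDerivAt (fun u' => x u' t)
        (g u t • ((Real.cos (νf u t), Real.sin (νf u t)) : ℝ × ℝ)) u)
    (hνu : ∀ u, ∀ t ∈ Set.Ico (0:ℝ) T, HasDerivAt (fun u' => νf u' t) (νu u t) u)
    (hinj : ∀ t ∈ Set.Ico (0:ℝ) T, Set.InjOn (fun u => x u t) (Set.Ico 0 1))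
    (hA : ∀ t ∈ Set.Ico (0:ℝ) T, 0 < areaF x g νf t)
    -- the anisoperimetric ratio gradient flow equation `∂_t x = (k_σ − L_σ/(2A))·N`
    (hflow : ∀ u, ∀ t ∈ Set.Ico (0:ℝ) T,
      HasDerivWithinAt (fun t' => x u t')
        ((((σ (νf u t) + deriv (deriv σ) (νf u t)) * (νu u t / g u t) -
            aLenF σ g νf t / (2 * areaF x g νf t)) •
          ((-Real.sin (νf u t), Real.cos (νf u t)) : ℝ × ℝ)))
        (Set.Ico 0 T) t)
    -- the initial curve parameterizes the Wulff boundary ∂W_{σ̄}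
    (hinit : Set.range (fun u => x u 0) = Set.range (wulffPoint (modAniso σ a b))) :
    HasDerivWithinAt (areaF x g νf)
      (Real.sqrt (π * wulffArea σ) - (1 / 2) * ∫ s in (0:ℝ)..(2 * π), σ s)
      (Set.Ico 0 T) 0 ∧
    Real.sqrt (π * wulffArea σ) - (1 / 2) * (∫ s in (0:ℝ)..(2 * π), σ s) < 0 := by
  have h0 : (0 : ℝ) ∈ Set.Ico 0 T := ⟨le_rfl, hT⟩
  exact initial_area_decrease_anisoperimetric_flow_general
    ⟨contDiff_infty.1 hσs 2, hσper, hσpos, hσconv⟩ hnr ha hb hab hT (hxs.of_le (mod_cast le_top))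
    (fun t ht => zero_add (1 : ℝ) ▸ hper 0 t ht) htang (hg · 0 h0)
    (zero_add (1 : ℝ) ▸ hνper 0 0 h0)
    (fun u => (hνu u 0 h0).congr_deriv (div_mul_cancel₀ _ (hg u 0 h0).ne').symm)
    (hA 0 h0) (hflow · 0 h0) hinit.subset
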